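/- Under Assumption 1 (correctness of structure recovery with bounded in-degree), fix i ∈ [m] and an integer K with |A(i)| ≤ K ≤ m − 2, and let M = max { I(X_S → X_i) : S ⊆ [m]∖{i}, |S| = K }. Then a subset S ⊆ [m]∖{i} with |S| = K satisfies I(X_S → X_i) = M if and only if A(i) ⊆ S, and consequently A(i) = ⋂ { S ⊆ [m]∖{i} : |S| = K and I(X_S → X_i) = M }. -/

import Mathlib

open Finset

/-- Probability of an event under the probability mass function `p` on a finite space. -/
noncomputable def pr {Ω : Type} [Fintype Ω] (p : Ω → ℝ) (E : Set Ω) : ℝ :=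
  ∑ ω : Ω, E.indicator p ω

/-- Shannon conditional mutual information `I(A ; B | C)` of finite-valued random variables
on a finite probability space with pmf `p` (terms with vanishing probability contribute `0`,
by the conventions `Real.log 0 = 0`, `x / 0 = 0`). -/
noncomputable def cmi {Ω α β γ : Type} [Fintype Ω] [Fintype α] [Fintype β] [Fintype γ]
    (p : Ω → ℝ) (A : Ω → α) (B : Ω → β) (C : Ω → γ) : ℝ :=
  ∑ a : α, ∑ b : β, ∑ c : γ,
    pr p {ω | A ω = a ∧ B ω = b ∧ C ω = c} *
      Real.log (pr p {ω | A ω = a ∧ B ω = b ∧ C ω = c} * pr p {ω | C ω = c} /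
        (pr p {ω | A ω = a ∧ C ω = c} * pr p {ω | B ω = b ∧ C ω = c}))

/-- `A` and `B` are conditionally independent given `C` (under the pmf `p`). -/
def CondIndep {Ω α β γ : Type} [Fintype Ω] (p : Ω → ℝ)
    (A : Ω → α) (B : Ω → β) (C : Ω → γ) : Prop :=
  ∀ (a : α) (b : β) (c : γ),
    pr p {ω | A ω = a ∧ B ω = b ∧ C ω = c} * pr p {ω | C ω = c}
      = pr p {ω | A ω = a ∧ C ω = c} * pr p {ω | B ω = b ∧ C ω = c}

/-- Trajectories of `m` processes over `n` time steps with alphabet `𝒳`: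
`ω i j` is the value of process `i` at (0-indexed) time `j`. -/
abbrev Traj (m n : ℕ) (𝒳 : Type) := Fin m → Fin n → 𝒳

/-- The past `X_S^{j-1}`: the values of the processes in `S` at times strictly before `j`;
all other entries are masked by `none`. -/
def past {m n : ℕ} {𝒳 : Type} (S : Finset (Fin m)) (j : Fin n) (ω : Traj m n 𝒳) :
    Fin m → Fin n → Option 𝒳 :=
  fun k t => if k ∈ S ∧ t < j then some (ω k t) else none

/-- Causally conditioned directed information
`I(X_S → X_i ‖ X_T) := Σ_{j=1}^{n} I(X_S^{j-1} ; X_{i,j} | X_i^{j-1}, X_T^{j-1})`. -/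
noncomputable def di {m n : ℕ} {𝒳 : Type} [Fintype 𝒳] [DecidableEq 𝒳]
    (p : Traj m n 𝒳 → ℝ) (S : Finset (Fin m)) (i : Fin m) (T : Finset (Fin m)) : ℝ :=
  ∑ j : Fin n,
    cmi p (past S j) (fun ω => ω i j) (fun ω => (past {i} j ω, past T j ω))

/-- Assumption 1: the joint distribution is strictly positive (and is a pmf), and at each
time `j` the variables `X_{1,j}, …, X_{m,j}` are mutually conditionally independent given
the full past `X_{[m]}^{j-1}` (stated in the division-free form
`P(joint ∧ past) · P(past)^{m-1} = Π_i P(X_{i,j} = x_i ∧ past)`). -/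
def Assumption1 {m n : ℕ} {𝒳 : Type} [Fintype 𝒳] [DecidableEq 𝒳]
    (p : Traj m n 𝒳 → ℝ) : Prop :=
  (∀ ω, 0 < p ω) ∧ (∑ ω : Traj m n 𝒳, p ω = 1) ∧
    ∀ (j : Fin n) (x : Fin m → 𝒳) (h : Fin m → Fin n → Option 𝒳),
      pr p {ω | (∀ i, ω i j = x i) ∧ past Finset.univ j ω = h} *
          pr p {ω | past Finset.univ j ω = h} ^ (m - 1)
        = ∏ i : Fin m, pr p {ω | ω i j = x i ∧ past Finset.univ j ω = h}

/-- `S ⊆ [m]∖{i}` is a causal Markov blanket of `X_i` if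
`I(X_{[m]∖({i}∪S)} → X_i ‖ X_S) = 0`. -/
def IsCausalBlanket {m n : ℕ} {𝒳 : Type} [Fintype 𝒳] [DecidableEq 𝒳]
    (p : Traj m n 𝒳 → ℝ) (i : Fin m) (S : Finset (Fin m)) : Prop :=
  S ⊆ Finset.univ.erase i ∧ di p (Finset.univ.erase i \ S) i S = 0

/-- A causal Markov boundary `A(i)` of `X_i` is a causal Markov blanket of minimum
cardinality. -/
def IsCausalBoundary {m n : ℕ} {𝒳 : Type} [Fintype 𝒳] [DecidableEq 𝒳]
    (p : Traj m n 𝒳 → ℝ) (i : Fin m) (A : Finset (Fin m)) : Prop :=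
  IsCausalBlanket p i A ∧
    ∀ B : Finset (Fin m), IsCausalBlanket p i B → A.card ≤ B.card

section FiniteProbability

variable {Ω α β γ : Type} [Fintype Ω] {p : Ω → ℝ}

lemma pr_nonneg (hp : ∀ ω, 0 < p ω) (E : Set Ω) : 0 ≤ pr p E :=
  Finset.sum_nonneg fun ω _ => Set.indicator_nonneg (fun ω _ => (hp ω).le) ω

lemma pr_pos (hp : ∀ ω, 0 < p ω) {E : Set Ω} {ω : Ω} (hω : ω ∈ E) : 0 < pr p E := by
  refine Finset.sum_pos' (fun ω _ => Set.indicator_nonneg (fun ω _ => (hp ω).le) ω)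
    ⟨ω, Finset.mem_univ _, ?_⟩
  rw [Set.indicator_of_mem hω]
  exact hp ω

lemma pr_eq_zero {E : Set Ω} (hE : ∀ ω, ω ∉ E) : pr p E = 0 :=
  Finset.sum_eq_zero fun ω _ => Set.indicator_of_notMem (hE ω) p

/-- The law of the unconscious statistician on a finite space. -/
lemma sum_pr_mul [Fintype α] (A : Ω → α) (f : α → ℝ) :
    ∑ a, pr p {ω | A ω = a} * f a = ∑ ω, p ω * f (A ω) := by
  classical
  simp only [pr, Finset.sum_mul]
  rw [Finset.sum_comm]
  refine Finset.sum_congr rfl fun ω _ => ?_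
  rw [Finset.sum_eq_single (A ω)]
  · simp
  · intro a _ ha
    simp [Set.indicator, Ne.symm ha]
  · simp

lemma sum_pr_and [Fintype β] (B : Ω → β) (E : Ω → Prop) :
    ∑ b, pr p {ω | B ω = b ∧ E ω} = pr p {ω | E ω} := by
  classical
  simp only [pr]
  rw [Finset.sum_comm]
  refine Finset.sum_congr rfl fun ω _ => ?_
  rw [Finset.sum_eq_single (B ω)]
  · simp [Set.indicator]
  · intro b _ hb
    simp [Set.indicator, Ne.symm hb]
  · simp

lemma pr_and_comp_eq_sum [Fintype α] [DecidableEq γ] (V : Ω → α) (φ : α → γ)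
    (E : Ω → Prop) (c : γ) :
    pr p {ω | E ω ∧ φ (V ω) = c}
      = ∑ v, if φ v = c then pr p {ω | E ω ∧ V ω = v} else 0 := by
  classical
  rw [← sum_pr_and V]
  refine Finset.sum_congr rfl fun v _ => ?_
  split_ifs with h
  · congr 1
    ext ω
    simp only [Set.mem_ofPred_eq]
    constructor
    · rintro ⟨h1, h2, _⟩
      exact ⟨h2, h1⟩
    · rintro ⟨h1, h2⟩
      exact ⟨h2, h1, by rw [h2, h]⟩
  · refine pr_eq_zero ?_
    rintro ω ⟨h1, _, h2⟩
    exact h (h1 ▸ h2)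

/-- The conditional probability of the observed value of `B` given the observed value of `V`. -/
noncomputable def condProb (p : Ω → ℝ) (B : Ω → β) (V : Ω → α) (ω : Ω) : ℝ :=
  pr p {ω' | B ω' = B ω ∧ V ω' = V ω} / pr p {ω' | V ω' = V ω}

lemma condProb_pos (hp : ∀ ω, 0 < p ω) (B : Ω → β) (V : Ω → α) (ω : Ω) :
    0 < condProb p B V ω :=
  div_pos (pr_pos hp (ω := ω) ⟨rfl, rfl⟩) (pr_pos hp (ω := ω) rfl)

lemma condProb_congr (B : Ω → β) (V : Ω → α) {ω ω' : Ω} (hB : B ω = B ω')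
    (hV : V ω = V ω') : condProb p B V ω = condProb p B V ω' := by
  simp only [condProb, hB, hV]

lemma sum_mul_condProb_comp_div_le_one [Fintype α] [Fintype β] (hp : ∀ ω, 0 < p ω)
    (hsum : ∑ ω, p ω = 1) (B : Ω → β) (V : Ω → α) (φ : α → γ) :
    ∑ ω, p ω * (condProb p B (φ ∘ V) ω / condProb p B V ω) ≤ 1 := by
  have key := sum_pr_mul (p := p) (fun ω => (V ω, B ω)) fun x =>
    (pr p {ω | B ω = x.2 ∧ φ (V ω) = φ x.1} / pr p {ω | φ (V ω) = φ x.1}) /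
      (pr p {ω | B ω = x.2 ∧ V ω = x.1} / pr p {ω | V ω = x.1})
  calc _ = _ := key.symm
    _ ≤ ∑ v, pr p {ω | V ω = v} * 1 := ?_
    _ = 1 := by rw [sum_pr_mul V fun _ => 1]; simpa using hsum
  rw [Fintype.sum_prod_type]
  refine Finset.sum_le_sum fun v _ => ?_
  calc _ ≤ ∑ b, pr p {ω | V ω = v} *
        (pr p {ω | B ω = b ∧ φ (V ω) = φ v} / pr p {ω | φ (V ω) = φ v}) := ?_
    _ ≤ _ := ?_
  · refine Finset.sum_le_sum fun b _ => ?_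
    have hset : {ω | (V ω, B ω) = (v, b)} = {ω | B ω = b ∧ V ω = v} := by
      ext ω
      simp [and_comm]
    rw [hset]
    rcases (pr_nonneg hp {ω | B ω = b ∧ V ω = v}).eq_or_lt with h0 | h0
    · rw [← h0, zero_mul]
      exact mul_nonneg (pr_nonneg hp _) (div_nonneg (pr_nonneg hp _) (pr_nonneg hp _))
    · refine le_of_eq ?_
      rw [div_div_eq_mul_div, mul_div_cancel₀ _ h0.ne', mul_comm]
  · rw [← Finset.mul_sum, ← Finset.sum_div, sum_pr_and B fun ω => φ (V ω) = φ v]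
    exact mul_le_mul_of_nonneg_left (div_self_le_one _) (pr_nonneg hp _)

/-- Minus the conditional entropy of `B` given `V`. -/
noncomputable def negCondEntropy (p : Ω → ℝ) (B : Ω → β) (V : Ω → α) : ℝ :=
  ∑ ω, p ω * Real.log (condProb p B V ω)

lemma log_condProb_div_le (hp : ∀ ω, 0 < p ω) (B : Ω → β) (V : Ω → α) (W : Ω → γ) (ω : Ω) :
    p ω * Real.log (condProb p B W ω) - p ω * Real.log (condProb p B V ω)
      ≤ p ω * (condProb p B W ω / condProb p B V ω) - p ω := by
  have hW := condProb_pos hp B W ω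
  have hV := condProb_pos hp B V ω
  have h := Real.log_le_sub_one_of_pos (div_pos hW hV)
  rw [Real.log_div hW.ne' hV.ne'] at h
  have := mul_le_mul_of_nonneg_left h (hp ω).le
  linarith

lemma negCondEntropy_comp_le [Fintype α] [Fintype β] (hp : ∀ ω, 0 < p ω)
    (hsum : ∑ ω, p ω = 1) (B : Ω → β) (V : Ω → α) (φ : α → γ) :
    negCondEntropy p B (φ ∘ V) ≤ negCondEntropy p B V := by
  have h := Finset.sum_le_sum fun ω (_ : ω ∈ Finset.univ) =>
    log_condProb_div_le hp B V (φ ∘ V) ω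
  rw [Finset.sum_sub_distrib, Finset.sum_sub_distrib, hsum] at h
  have := sum_mul_condProb_comp_div_le_one hp hsum B V φ
  unfold negCondEntropy
  linarith

lemma condProb_comp_eq_of_negCondEntropy_eq [Fintype α] [Fintype β] (hp : ∀ ω, 0 < p ω)
    (hsum : ∑ ω, p ω = 1) (B : Ω → β) (V : Ω → α) (φ : α → γ)
    (h : negCondEntropy p B (φ ∘ V) = negCondEntropy p B V) (ω : Ω) :
    condProb p B (φ ∘ V) ω = condProb p B V ω := by
  have hle := fun ω (_ : ω ∈ Finset.univ) => log_condProb_div_le hp B V (φ ∘ V) ω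
  have hone := sum_mul_condProb_comp_div_le_one hp hsum B V φ
  have heq := (Finset.sum_eq_sum_iff_of_le hle).1 (by
    refine le_antisymm (Finset.sum_le_sum hle) ?_
    rw [Finset.sum_sub_distrib, Finset.sum_sub_distrib, hsum]
    unfold negCondEntropy at h
    linarith) ω (Finset.mem_univ ω)
  have hW := condProb_pos hp B (φ ∘ V) ω
  have hV := condProb_pos hp B V ω
  by_contra hne
  have hlt := Real.log_lt_sub_one_of_pos (div_pos hW hV) (by rwa [Ne, div_eq_one_iff_eq hV.ne'])
  rw [Real.log_div hW.ne' hV.ne'] at hlt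
  have := mul_lt_mul_of_pos_left hlt (hp ω)
  linarith

/-- If the conditional law of `B` given `V` only depends on `φ ∘ V`, it is the conditional law
of `B` given `φ ∘ V`. -/
lemma condProb_comp_eq [Fintype α] (hp : ∀ ω, 0 < p ω) (B : Ω → β) (V : Ω → α) (φ : α → γ)
    (hsurj : ∀ ω b, ∃ ω', B ω' = b ∧ V ω' = V ω)
    (hdep : ∀ ω ω', B ω = B ω' → φ (V ω) = φ (V ω') → condProb p B V ω = condProb p B V ω')
    (ω : Ω) : condProb p B (φ ∘ V) ω = condProb p B V ω := by
  classical
  have hpos : 0 < pr p {ω' | φ (V ω') = φ (V ω)} := pr_pos hp (ω := ω) rfl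
  change pr p {ω' | B ω' = B ω ∧ φ (V ω') = φ (V ω)} / pr p {ω' | φ (V ω') = φ (V ω)} = _
  rw [div_eq_iff hpos.ne', pr_and_comp_eq_sum V φ fun ω' => B ω' = B ω]
  have htrue := pr_and_comp_eq_sum (p := p) V φ (fun _ => True) (φ (V ω))
  simp only [true_and] at htrue
  rw [htrue, Finset.mul_sum]
  refine Finset.sum_congr rfl fun v _ => ?_
  split_ifs with hv
  · by_cases hex : ∃ ω₁, V ω₁ = v
    · obtain ⟨ω₁, rfl⟩ := hex
      obtain ⟨ω₂, hB, hV⟩ := hsurj ω₁ (B ω)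
      rw [hdep ω ω₂ hB.symm (by rw [hV, hv]), condProb, hB, hV]
      have : 0 < pr p {ω' | V ω' = V ω₁} := pr_pos hp (ω := ω₁) rfl
      rw [div_mul_cancel₀ _ this.ne']
    · push Not at hex
      rw [pr_eq_zero fun ω' h => hex ω' h.2, pr_eq_zero (E := {ω' | V ω' = v}) hex, mul_zero]
  · simp

lemma cmi_eq_sum [Fintype α] [Fintype β] [Fintype γ] (A : Ω → α) (B : Ω → β) (C : Ω → γ) :
    cmi p A B C = ∑ ω, p ω *
      Real.log (pr p {ω' | A ω' = A ω ∧ B ω' = B ω ∧ C ω' = C ω} * pr p {ω' | C ω' = C ω} /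
        (pr p {ω' | A ω' = A ω ∧ C ω' = C ω} * pr p {ω' | B ω' = B ω ∧ C ω' = C ω})) := by
  have key := sum_pr_mul (p := p) (fun ω => (A ω, B ω, C ω)) fun x =>
    Real.log (pr p {ω' | A ω' = x.1 ∧ B ω' = x.2.1 ∧ C ω' = x.2.2} *
      pr p {ω' | C ω' = x.2.2} / (pr p {ω' | A ω' = x.1 ∧ C ω' = x.2.2} *
        pr p {ω' | B ω' = x.2.1 ∧ C ω' = x.2.2}))
  rw [← key]
  simp only [Fintype.sum_prod_type, Prod.mk.injEq]
  rfl

end FiniteProbability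

section Processes

variable {m n : ℕ} {𝒳 : Type}

lemma past_eq_past_iff {S : Finset (Fin m)} {j : Fin n} {ω ω' : Traj m n 𝒳} :
    past S j ω = past S j ω' ↔ ∀ k ∈ S, ∀ t < j, ω k t = ω' k t := by
  constructor
  · intro h k hk t ht
    have := congrFun (congrFun h k) t
    simpa [past, hk, ht] using this
  · intro h
    funext k t
    by_cases hkt : k ∈ S ∧ t < j
    · simp [past, hkt, h k hkt.1 t hkt.2]
    · simp [past, hkt]

/-- Masking the entries outside of `T`. -/
def maskOutside (T : Finset (Fin m)) (h : Fin m → Fin n → Option 𝒳) :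
    Fin m → Fin n → Option 𝒳 :=
  fun k t => if k ∈ T then h k t else none

lemma maskOutside_comp_past {S T : Finset (Fin m)} (hTS : T ⊆ S) (j : Fin n) :
    maskOutside T ∘ past (𝒳 := 𝒳) S j = past T j := by
  funext ω k t
  by_cases hk : k ∈ T
  · simp [maskOutside, past, hk, hTS hk]
  · simp [maskOutside, past, hk]

variable [Fintype 𝒳] {p : Traj m n 𝒳 → ℝ}

/-- The conditional probability of `X_{i,j}` given the pasts of `X_i` and `X_S`. -/
noncomputable def stepProb (p : Traj m n 𝒳 → ℝ) (i : Fin m) (S : Finset (Fin m)) (j : Fin n) :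
    Traj m n 𝒳 → ℝ :=
  condProb p (fun ω => ω i j) (past (insert i S) j)

/-- Minus the entropy of `X_i` causally conditioned on `X_S`. -/
noncomputable def negCausalEntropy (p : Traj m n 𝒳 → ℝ) (i : Fin m) (S : Finset (Fin m)) : ℝ :=
  ∑ j, negCondEntropy p (fun ω => ω i j) (past (insert i S) j)

lemma cmi_past_eq_sub (hp : ∀ ω, 0 < p ω) (S : Finset (Fin m)) (i : Fin m)
    (T : Finset (Fin m)) (j : Fin n) :
    cmi p (past S j) (fun ω => ω i j) (fun ω => (past {i} j ω, past T j ω))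
      = negCondEntropy p (fun ω => ω i j) (past (insert i (S ∪ T)) j)
        - negCondEntropy p (fun ω => ω i j) (past (insert i T) j) := by
  have hT : ∀ ω ω' : Traj m n 𝒳, (past {i} j ω', past T j ω') = (past {i} j ω, past T j ω) ↔
      past (insert i T) j ω' = past (insert i T) j ω := by
    intro ω ω'
    simp only [Prod.mk.injEq, past_eq_past_iff, Finset.mem_insert, Finset.mem_singleton,
      or_imp, forall_and, forall_eq]
  have hST : ∀ ω ω' : Traj m n 𝒳, (past S j ω' = past S j ω ∧
      past (insert i T) j ω' = past (insert i T) j ω) ↔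
      past (insert i (S ∪ T)) j ω' = past (insert i (S ∪ T)) j ω := by
    intro ω ω'
    simp only [past_eq_past_iff, Finset.mem_insert, Finset.mem_union,
      or_imp, forall_and, forall_eq]
    tauto
  rw [cmi_eq_sum, negCondEntropy, negCondEntropy, ← Finset.sum_sub_distrib]
  refine Finset.sum_congr rfl fun ω _ => ?_
  rw [← mul_sub, ← Real.log_div (condProb_pos hp _ _ ω).ne' (condProb_pos hp _ _ ω).ne']
  simp only [hT, and_left_comm (a := past S j _ = past S j ω), hST, condProb]
  rw [div_div_div_eq, mul_comm (pr p {ω' | past (insert i (S ∪ T)) j ω' = _})]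

lemma negCondEntropy_past_mono (hp : ∀ ω, 0 < p ω) (hsum : ∑ ω, p ω = 1) (i : Fin m)
    {S T : Finset (Fin m)} (hTS : T ⊆ S) (j : Fin n) :
    negCondEntropy p (fun ω => ω i j) (past (insert i T) j)
      ≤ negCondEntropy p (fun ω => ω i j) (past (insert i S) j) := by
  rw [← maskOutside_comp_past (Finset.insert_subset_insert i hTS) j]
  exact negCondEntropy_comp_le hp hsum _ _ _

lemma negCausalEntropy_mono (hp : ∀ ω, 0 < p ω) (hsum : ∑ ω, p ω = 1) (i : Fin m)
    {S T : Finset (Fin m)} (hTS : T ⊆ S) :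
    negCausalEntropy p i T ≤ negCausalEntropy p i S :=
  Finset.sum_le_sum fun j _ => negCondEntropy_past_mono hp hsum i hTS j

lemma negCausalEntropy_eq_iff (hp : ∀ ω, 0 < p ω) (hsum : ∑ ω, p ω = 1) (i : Fin m)
    {S T : Finset (Fin m)} (hTS : T ⊆ S) :
    negCausalEntropy p i T = negCausalEntropy p i S ↔
      ∀ j ω, stepProb p i T j ω = stepProb p i S j ω := by
  constructor
  · intro h j ω
    have hj := (Finset.sum_eq_sum_iff_of_le
      fun j _ => negCondEntropy_past_mono hp hsum i hTS j).1 h j (Finset.mem_univ j)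
    rw [stepProb, stepProb]
    rw [← maskOutside_comp_past (Finset.insert_subset_insert i hTS) j] at hj ⊢
    exact condProb_comp_eq_of_negCondEntropy_eq hp hsum _ _ _ hj ω
  · intro h
    unfold negCausalEntropy negCondEntropy
    refine Finset.sum_congr rfl fun j _ => Finset.sum_congr rfl fun ω _ => ?_
    rw [show condProb p _ (past (insert i T) j) ω = _ from h j ω]
    rfl

lemma stepProb_congr (i : Fin m) (S : Finset (Fin m)) (j : Fin n) {ω ω' : Traj m n 𝒳}
    (hij : ω i j = ω' i j) (h : ∀ k ∈ insert i S, ∀ t < j, ω k t = ω' k t) :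
    stepProb p i S j ω = stepProb p i S j ω' :=
  condProb_congr _ _ hij (past_eq_past_iff.2 h)

/-- The intersection property of strictly positive distributions, in causal form. -/
lemma stepProb_inter (hp : ∀ ω, 0 < p ω) (i : Fin m) {S T F : Finset (Fin m)} (hSF : S ⊆ F)
    (hS : ∀ j ω, stepProb p i S j ω = stepProb p i F j ω)
    (hT : ∀ j ω, stepProb p i T j ω = stepProb p i F j ω) (j : Fin n) (ω : Traj m n 𝒳) :
    stepProb p i (S ∩ T) j ω = stepProb p i F j ω := by
  have hsub : insert i (S ∩ T) ⊆ insert i F :=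
    Finset.insert_subset_insert i (Finset.inter_subset_left.trans hSF)
  rw [stepProb, stepProb, ← maskOutside_comp_past hsub j]
  refine condProb_comp_eq hp _ _ _ ?_ ?_ ω
  · intro ω b
    refine ⟨Function.update ω i (Function.update (ω i) j b), by simp, ?_⟩
    rw [past_eq_past_iff]
    intro k _ t ht
    rcases eq_or_ne k i with rfl | hk
    · simp [ht.ne]
    · simp [hk]
  · intro ω ω' hij h
    change (maskOutside _ ∘ past _ j) ω = (maskOutside _ ∘ past _ j) ω' at h
    rw [maskOutside_comp_past hsub j, past_eq_past_iff] at h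
    change stepProb p i F j ω = stepProb p i F j ω'
    have hglue : stepProb p i S j ω
        = stepProb p i S j (fun k => if k ∈ insert i S then ω k else ω' k) := by
      refine stepProb_congr i S j (by simp) fun k hk t _ => ?_
      simp only [if_pos hk]
    have hglue' : stepProb p i T j (fun k => if k ∈ insert i S then ω k else ω' k)
        = stepProb p i T j ω' := by
      refine stepProb_congr i T j (by simpa using hij) fun k hk t ht => ?_
      by_cases hkS : k ∈ insert i S
      · simp only [if_pos hkS]
        refine h k ?_ t ht
        rw [Finset.insert_inter_distrib]
        exact Finset.mem_inter.2 ⟨hkS, hk⟩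
      · simp only [if_neg hkS]
    rw [← hS, hglue, hS, ← hT, hglue', hT]

variable [DecidableEq 𝒳]

lemma di_eq_sub (hp : ∀ ω, 0 < p ω) (S : Finset (Fin m)) (i : Fin m) (T : Finset (Fin m)) :
    di p S i T = negCausalEntropy p i (S ∪ T) - negCausalEntropy p i T := by
  simp only [di, negCausalEntropy, cmi_past_eq_sub hp, Finset.sum_sub_distrib]

lemma isCausalBlanket_iff (hp : ∀ ω, 0 < p ω) (i : Fin m) {S : Finset (Fin m)}
    (hS : S ⊆ Finset.univ.erase i) :
    IsCausalBlanket p i S ↔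
      negCausalEntropy p i S = negCausalEntropy p i (Finset.univ.erase i) := by
  rw [IsCausalBlanket, di_eq_sub hp, Finset.sdiff_union_of_subset hS, sub_eq_zero, eq_comm]
  exact and_iff_right hS

lemma IsCausalBlanket.inter (hp : ∀ ω, 0 < p ω) (hsum : ∑ ω, p ω = 1) {i : Fin m}
    {S T : Finset (Fin m)} (hS : IsCausalBlanket p i S) (hT : IsCausalBlanket p i T) :
    IsCausalBlanket p i (S ∩ T) := by
  have hST : S ∩ T ⊆ Finset.univ.erase i := Finset.inter_subset_left.trans hS.1
  rw [isCausalBlanket_iff hp i hST, negCausalEntropy_eq_iff hp hsum i hST]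
  exact stepProb_inter hp i hS.1
    ((negCausalEntropy_eq_iff hp hsum i hS.1).1 ((isCausalBlanket_iff hp i hS.1).1 hS))
    ((negCausalEntropy_eq_iff hp hsum i hT.1).1 ((isCausalBlanket_iff hp i hT.1).1 hT))

lemma IsCausalBoundary.isCausalBlanket_iff_subset (hp : ∀ ω, 0 < p ω) (hsum : ∑ ω, p ω = 1)
    {i : Fin m} {A : Finset (Fin m)} (hA : IsCausalBoundary p i A) {S : Finset (Fin m)}
    (hS : S ⊆ Finset.univ.erase i) : IsCausalBlanket p i S ↔ A ⊆ S := by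
  constructor
  · intro h
    have := Finset.eq_of_subset_of_card_le Finset.inter_subset_left
      (hA.2 _ (hA.1.inter hp hsum h))
    exact Finset.inter_eq_left.1 this
  · intro h
    rw [isCausalBlanket_iff hp i hS]
    refine le_antisymm (negCausalEntropy_mono hp hsum i hS) ?_
    rw [← (isCausalBlanket_iff hp i hA.1.1).1 hA.1]
    exact negCausalEntropy_mono hp hsum i h

end Processes

/-- correctness of structure recovery with bounded in-degree.
Under Assumption 1, fix `i`, the causal Markov boundary `A(i)`, and `K` with
`|A(i)| ≤ K ≤ m − 2`. Let `M` be the maximum of `I(X_S → X_i)` over all `S ⊆ [m]∖{i}`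
with `|S| = K`. Then such an `S` attains `M` iff `A(i) ⊆ S`, and `A(i)` is the
intersection of all the maximizing sets. -/
theorem stmt_11 {m n : ℕ} (hm : 2 ≤ m) (hn : 1 ≤ n)
    {𝒳 : Type} [Fintype 𝒳] [DecidableEq 𝒳] [Nonempty 𝒳]
    (p : Traj m n 𝒳 → ℝ) (hp : Assumption1 p)
    (i : Fin m) (A : Finset (Fin m)) (hA : IsCausalBoundary p i A)
    (K : ℕ) (hK1 : A.card ≤ K) (hK2 : K ≤ m - 2)
    (M : ℝ)
    (hM : IsGreatest
      {r : ℝ | ∃ S ⊆ Finset.univ.erase i, S.card = K ∧ r = di p S i ∅} M) :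
    (∀ S ⊆ Finset.univ.erase i, S.card = K → (di p S i ∅ = M ↔ A ⊆ S)) ∧
      (∀ k : Fin m, k ∈ A ↔
        ∀ S ⊆ Finset.univ.erase i, S.card = K → di p S i ∅ = M → k ∈ S) := by
  obtain ⟨hpos, hsum, -⟩ := hp
  have hcard : (Finset.univ.erase i).card = m - 1 := by simp
  have hdi : ∀ S : Finset (Fin m),
      di p S i ∅ = negCausalEntropy p i S - negCausalEntropy p i ∅ := by
    intro S
    rw [di_eq_sub hpos, Finset.union_empty]
  have hMF : M = di p (Finset.univ.erase i) i ∅ := by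
    obtain ⟨⟨S, hSF, -, rfl⟩, hub⟩ := hM
    refine le_antisymm ?_ ?_
    · rw [hdi, hdi]
      exact sub_le_sub_right (negCausalEntropy_mono hpos hsum i hSF) _
    · obtain ⟨T, hAT, hTF, hTK⟩ :=
        Finset.exists_subsuperset_card_eq hA.1.1 hK1 (by omega)
      have hT := hub ⟨T, hTF, hTK, rfl⟩
      rwa [hdi T, (isCausalBlanket_iff hpos i hTF).1
        ((hA.isCausalBlanket_iff_subset hpos hsum hTF).2 hAT), ← hdi] at hT
  have hmax : ∀ S ⊆ Finset.univ.erase i, (di p S i ∅ = M ↔ A ⊆ S) := by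
    intro S hS
    rw [← hA.isCausalBlanket_iff_subset hpos hsum hS, isCausalBlanket_iff hpos i hS, hMF,
      hdi, hdi, sub_left_inj]
  refine ⟨fun S hS _ => hmax S hS, fun k => ⟨fun hk S hS _ h => (hmax S hS).1 h hk, ?_⟩⟩
  intro h
  by_contra hk
  have hle : K ≤ ((Finset.univ.erase i).erase k).card := by
    have := Finset.pred_card_le_card_erase (s := Finset.univ.erase i) (a := k)
    omega
  obtain ⟨T, hAT, hTF, hTK⟩ := Finset.exists_subsuperset_card_eq
    (Finset.subset_erase.2 ⟨hA.1.1, hk⟩) hK1 hle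
  have hT := Finset.subset_erase.1 hTF
  exact hT.2 (h T hT.1 hTK ((hmax T hT.1).2 hAT))
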